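/- Let n ≥ 1 be an integer, p a prime with p > n, and k ≥ 1. For any function f : (ℤ/p^kℤ)ⁿ → ℕ that is not identically zero one has ∑_{x ∈ (ℤ/p^kℤ)ⁿ} f(x)ⁿ ≥ C · |ℙ(ℤ/p^kℤ)^{n-1}|^{-1} · ∑_{u ∈ ℙ(ℤ/p^kℤ)^{n-1}} f*(u)ⁿ, where C = ( ⌈log_p(max_u f*(u))⌉ + 1 )^{-n} · (1 + n/p)^{-n}. -/

import Mathlib

/-- A vector in `(ℤ/Nℤ)ⁿ` is primitive (for `N = p^k`: some coordinate is a unit). -/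
def IsPrimitiveVec {N n : ℕ} (u : Fin n → ZMod N) : Prop :=
  ∃ v : Fin n → ZMod N, ∑ i, v i * u i = 1

/-- `P` is a fixed set of representatives for the projective space `ℙ(ℤ/Nℤ)^{n-1}`. -/
def IsProjRepSet (N n : ℕ) [NeZero N] (P : Finset (Fin n → ZMod N)) : Prop :=
  (∀ u ∈ P, IsPrimitiveVec u) ∧
  ∀ u : Fin n → ZMod N, IsPrimitiveVec u →
    ∃! w, w ∈ P ∧ ∃ c : (ZMod N)ˣ, u = (c : ZMod N) • w

/-- The maximal function of `f : (ℤ/Nℤ)ⁿ → ℕ` in direction `u`: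
the largest sum of `f` over a line in direction `u`. -/
def fstar {N n : ℕ} [NeZero N] (f : (Fin n → ZMod N) → ℕ) (u : Fin n → ZMod N) : ℕ :=
  Finset.univ.sup fun a : Fin n → ZMod N => ∑ t : ZMod N, f (a + t • u)

/-!
The proof is an instance of the polynomial method. Let `ζ` be a primitive `p ^ k`-th root of unity,
and consider polynomials `F` vanishing to order `f x` at every point `ζ ^ x`. The line through `b`
in direction `U` becomes the monomial curve `t ↦ (ζ ^ b j * t ^ U j)`, and the restriction of `F` to
it is divisible by `∏ s, (X - ζ ^ s) ^ f (b + s • U)`. So the coefficients of its remainder modulo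
this product, one family for each direction, span a space of functionals of dimension at most the
number `∑ x, #(jetIndices (f x))` of vanishing conditions. Modulo the prime of `ℤ[ζ]` above `p`,
where `ζ` becomes `1`, the coefficient of `(X - 1) ^ i` of the remainder for the monomial `X ^ d` is
the binomial coefficient `(U ⬝ᵥ d).choose i`, so the rank over `ZMod p` of these rows of binomial
coefficients, for `U` a direction and `i < fstar f U`, is a lower bound for that number.

To estimate this rank, choose a basis of the rows adapted to the filtration by the level `i`, move
it by a matrix of `GLₙ` and average, which makes every direction equally likely. At level
`A ≤ p ^ M` the rows span at least `#(jetIndices (A ⌈/⌉ M))` dimensions, because a nonzero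
polynomial of degree less than `A / M` cannot vanish to order `A` at `1` along every curve `X ^ U`:
Newton interpolation at powers of `X` bounds this order in terms of those of the `X ^ m - 1`, which
are the `p`-parts of the `m`. Finally, applying the resulting inequality to `p • f` makes the loss
in passing from jet counts to `n`-th powers only the factor `(1 + n / p) ^ n`.
-/

open Finset Polynomial Matrix

section Jets

variable (σ : Type*) [Fintype σ] [DecidableEq σ]

/-- The exponents of degree less than `M`: a polynomial vanishes to order `M` at a point when its
Taylor coefficients there with these exponents are zero. -/
def jetIndices (M : ℕ) : Finset (σ →₀ ℕ) :=
  (range M).biUnion fun m => finsuppAntidiag univ m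

variable {σ}

theorem mem_jetIndices {M : ℕ} {α : σ →₀ ℕ} : α ∈ jetIndices σ M ↔ α.degree < M := by
  simp [jetIndices, mem_finsuppAntidiag, Finsupp.degree_eq_sum]

theorem card_jetIndices (M : ℕ) :
    #(jetIndices σ M) = ∑ m ∈ range M, (Fintype.card σ + m - 1).choose m := by
  rw [jetIndices, card_biUnion]
  · simp only [card_finsuppAntidiag_nat_eq_choose, card_univ]
  · intro a _ b _ hab
    refine Finset.disjoint_left.2 fun α ha hb => ?_
    exact hab ((mem_finsuppAntidiag.1 ha).1.symm.trans (mem_finsuppAntidiag.1 hb).1)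

variable [Nonempty σ]

theorem factorial_mul_card_jetIndices (M : ℕ) :
    (Fintype.card σ).factorial * #(jetIndices σ M) = M.ascFactorial (Fintype.card σ) := by
  rw [card_jetIndices, Nat.ascFactorial_eq_factorial_mul_choose']
  obtain ⟨n, hn⟩ := Nat.exists_eq_succ_of_ne_zero (Fintype.card_ne_zero (α := σ))
  rw [hn]
  cases M with
  | zero => simp
  | succ M =>
    congr 1
    calc ∑ m ∈ range (M + 1), (n + 1 + m - 1).choose m
        = ∑ m ∈ range (M + 1), (m + n).choose n :=
          sum_congr rfl fun m _ => by
            rw [show n + 1 + m - 1 = m + n by omega, Nat.choose_symm_add]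
      _ = (M + 1 + (n + 1) - 1).choose (n + 1) := by
        rw [Nat.sum_range_add_choose, show M + 1 + (n + 1) - 1 = M + n + 1 by omega]

theorem pow_le_factorial_mul_card_jetIndices (M : ℕ) :
    M ^ Fintype.card σ ≤ (Fintype.card σ).factorial * #(jetIndices σ M) :=
  (Nat.pow_succ_le_ascFactorial M _).trans_eq (factorial_mul_card_jetIndices M).symm

theorem pow_le_pow_mul_card_jetIndices_ceilDiv {M : ℕ} (hM : 0 < M) (A : ℕ) :
    A ^ Fintype.card σ ≤ M ^ Fintype.card σ *
      ((Fintype.card σ).factorial * #(jetIndices σ (A ⌈/⌉ M))) :=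
  calc A ^ Fintype.card σ ≤ (M * (A ⌈/⌉ M)) ^ Fintype.card σ :=
        Nat.pow_le_pow_left (le_smul_ceilDiv hM) _
    _ = M ^ Fintype.card σ * (A ⌈/⌉ M) ^ Fintype.card σ := mul_pow _ _ _
    _ ≤ _ := Nat.mul_le_mul_left _ (pow_le_factorial_mul_card_jetIndices _)

theorem factorial_mul_card_jetIndices_mul_le (p a : ℕ) :
    (Fintype.card σ).factorial * #(jetIndices σ (p * a)) ≤
      ((p + Fintype.card σ) * a) ^ Fintype.card σ := by
  rw [factorial_mul_card_jetIndices]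
  rcases Nat.eq_zero_or_pos (p * a) with h0 | h0
  · obtain ⟨n, hn⟩ := Nat.exists_eq_succ_of_ne_zero (Fintype.card_ne_zero (α := σ))
    rw [h0, hn, Nat.zero_ascFactorial]
    exact Nat.zero_le _
  · obtain ⟨m, hm⟩ := Nat.exists_eq_succ_of_ne_zero h0.ne'
    rw [hm]
    refine (Nat.ascFactorial_le_pow_add m _).trans (Nat.pow_le_pow_left ?_ _)
    have ha : 1 ≤ a := Nat.pos_of_mul_pos_left h0
    nlinarith [Nat.le_mul_of_pos_right (Fintype.card σ) ha]

end Jets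

section Independence

variable {T V O κ K : Type*} [CommRing O] [Field κ] [Field K]

/-- The determinant of `A` times a lifted right inverse maps to `1`, so it is nonzero in `K`. -/
theorem linearIndependent_row_map_of_surjective [Finite T] [Finite V] {φ : O →+* κ}
    (hφ : Function.Surjective φ) {ι : O →+* K} (hι : Function.Injective ι) (A : Matrix T V O)
    (hA : LinearIndependent κ (A.map φ).row) : LinearIndependent K (A.map ι).row := by
  classical
  cases nonempty_fintype T
  cases nonempty_fintype V
  have hsurj : Function.Surjective (A.map φ).mulVec :=
    LinearMap.range_eq_top.1 <| Submodule.eq_top_of_finrank_eq <|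
      hA.rank_matrix.trans (Module.finrank_fintype_fun_eq_card κ).symm
  obtain ⟨B', hB'⟩ := mulVec_surjective_iff_exists_right_inverse.1 hsurj
  obtain ⟨B, rfl⟩ : ∃ B : Matrix V T O, B.map φ = B' :=
    ⟨B'.map (Function.surjInv hφ), by ext; simp [Function.surjInv_eq]⟩
  have hdet : (A * B).det ≠ 0 := fun h0 => one_ne_zero (α := κ) <| by
    rw [← det_one (n := T), ← hB', ← Matrix.map_mul, ← RingHom.mapMatrix_apply, ← RingHom.map_det,
      h0, map_zero]
  have hdet' : (A.map ι * B.map ι).det ≠ 0 := by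
    rw [← Matrix.map_mul, ← RingHom.mapMatrix_apply, ← RingHom.map_det]
    exact (map_ne_zero_iff ι hι).2 hdet
  refine vecMul_injective_iff.1 fun v w hvw => sub_eq_zero.1 (eq_zero_of_vecMul_eq_zero hdet' ?_)
  rw [← vecMul_vecMul, sub_vecMul, sub_eq_zero.2 hvw, zero_vecMul]

theorem span_range_eq_top_of_forall_dotProduct_eq_zero [Fintype T] {ι : Type*} {v : ι → T → κ}
    (hv : ∀ g : T → κ, (∀ i, g ⬝ᵥ v i = 0) → g = 0) :
    Submodule.span κ (Set.range v) = ⊤ := by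
  classical
  by_contra hne
  obtain ⟨ψ, hψ, hker⟩ := Submodule.exists_le_ker_of_lt_top _ (lt_top_iff_ne_top.2 hne)
  have hdot : ∀ w, (fun t => ψ (Pi.single t 1)) ⬝ᵥ w = ψ w := fun w => by
    conv_rhs => rw [pi_eq_sum_univ' w]
    simp [dotProduct, mul_comm]
  have hzero := hv _ fun i => (hdot (v i)).trans (hker (Submodule.subset_span ⟨i, rfl⟩))
  exact hψ (LinearMap.ext fun w => by rw [← hdot, hzero, zero_dotProduct, LinearMap.zero_apply])

end Independence

section RootsOfUnity

theorem zmodChar_injective {M : Type*} [CommMonoid M] {N : ℕ} [NeZero N] {ζ : M}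
    (hζ : IsPrimitiveRoot ζ N) : Function.Injective (AddChar.zmodChar N hζ.pow_eq_one) :=
  fun a b hab => by
    rw [AddChar.zmodChar_apply, AddChar.zmodChar_apply] at hab
    exact ZMod.val_injective N (hζ.pow_inj a.val_lt b.val_lt hab)

theorem isPrimitiveRoot_root_cyclotomic (N : ℕ) [NeZero N] :
    IsPrimitiveRoot (AdjoinRoot.root (cyclotomic N ℤ)) N := by
  have hz := Complex.isPrimitiveRoot_exp N (NeZero.ne N)
  have hroot : aeval (Complex.exp (2 * Real.pi * Complex.I / N)) (cyclotomic N ℤ) = 0 := by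
    rw [aeval_def, ← eval_map, map_cyclotomic]
    exact hz.isRoot_cyclotomic (NeZero.pos N)
  let ψ : AdjoinRoot (cyclotomic N ℤ) →+* ℂ := AdjoinRoot.lift (Int.castRingHom ℂ) _ hroot
  refine ⟨?_, fun l hl => hz.dvd_of_pow_eq_one l ?_⟩
  · rw [← sub_eq_zero, ← AdjoinRoot.mk_X, ← map_pow, ← map_one (AdjoinRoot.mk (cyclotomic N ℤ)),
      ← map_sub, AdjoinRoot.mk_eq_zero]
    exact cyclotomic.dvd_X_pow_sub_one N ℤ
  · rw [← AdjoinRoot.lift_root hroot, ← map_pow]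
    exact (congrArg ψ hl).trans (map_one ψ)

/-- Reducing `ℤ[ζ]` modulo the prime above `p` sends `ζ` to `1`, as `Φ_{p^k}(1) = p`. -/
theorem exists_addChar_injective_map_eq_one (p k : ℕ) [Fact p.Prime] :
    ∃ (O : Type) (_ : CommRing O) (_ : IsDomain O) (φ : O →+* ZMod p)
      (χ : AddChar (ZMod (p ^ (k + 1))) O), Function.Injective χ ∧ ∀ s, φ (χ s) = 1 := by
  have hroot : (cyclotomic (p ^ (k + 1)) ℤ).eval₂ (Int.castRingHom (ZMod p)) 1 = 0 := by
    rw [← eval_map, map_cyclotomic, eval_one_cyclotomic_prime_pow, CharP.cast_eq_zero]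
  have hζ := isPrimitiveRoot_root_cyclotomic (p ^ (k + 1))
  refine ⟨AdjoinRoot (cyclotomic (p ^ (k + 1)) ℤ), inferInstance,
    AdjoinRoot.isDomain_of_prime (cyclotomic.irreducible (NeZero.pos _)).prime,
    AdjoinRoot.lift _ 1 hroot, AddChar.zmodChar _ hζ.pow_eq_one,
    zmodChar_injective hζ, fun s => ?_⟩
  rw [AddChar.zmodChar_apply, map_pow, AdjoinRoot.lift_root, one_pow]

end RootsOfUnity

section MonomialCurves

variable {σ R S : Type*} [CommRing R] [CommRing S]

/-- The restriction of a polynomial to the curve `t ↦ (a j * t ^ U j)`. For a character `χ` of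
`ZMod N` and `a = χ ∘ b`, this curve passes at `t = χ s` through the image of the point `b + s • U`
of the line through `b` in direction `U`. -/
noncomputable def compMonomialCurve (a : σ → R) (U : σ → ℕ) : MvPolynomial σ R →ₐ[R] R[X] :=
  MvPolynomial.aeval fun j => C (a j) * X ^ U j

/-- The coefficient with exponent `α` of the Taylor expansion of a polynomial at `x`. -/
noncomputable def mvTaylorCoeff (x : σ → R) (α : σ →₀ ℕ) : MvPolynomial σ R →ₗ[R] R :=
  MvPolynomial.lcoeff R α ∘ₗ
    (MvPolynomial.aeval fun j => MvPolynomial.X j + MvPolynomial.C (x j)).toLinearMap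

theorem compMonomialCurve_monomial [Fintype σ] (a : σ → R) (U : σ → ℕ) (d : σ →₀ ℕ) (c : R) :
    compMonomialCurve a U (MvPolynomial.monomial d c) =
      C (c * ∏ j, a j ^ d j) * X ^ (U ⬝ᵥ d) := by
  rw [compMonomialCurve, MvPolynomial.aeval_monomial, d.prod_fintype _ fun _ => pow_zero _]
  simp only [mul_pow, ← C_pow, ← pow_mul, prod_mul_distrib, prod_pow_eq_pow_sum, C_mul, map_prod,
    algebraMap_eq, mul_assoc, dotProduct]

theorem map_compMonomialCurve (φ : R →+* S) (a : σ → R) (U : σ → ℕ) (F : MvPolynomial σ R) :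
    (compMonomialCurve a U F).map φ = compMonomialCurve (φ ∘ a) U (F.map φ) := by
  induction F using MvPolynomial.induction_on with
  | C c => simp [compMonomialCurve]
  | add F G hF hG => simp only [map_add, Polynomial.map_add, hF, hG]
  | mul_X F j hF =>
    simp only [map_mul, Polynomial.map_mul, hF]
    simp [compMonomialCurve]

theorem X_sub_C_pow_dvd_compMonomialCurve [Fintype σ] [DecidableEq σ] {a x : σ → R} {U : σ → ℕ}
    {τ : R} {M : ℕ} {F : MvPolynomial σ R} (hx : ∀ j, x j = a j * τ ^ U j)
    (hF : ∀ α ∈ jetIndices σ M, mvTaylorCoeff x α F = 0) :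
    (X - C τ) ^ M ∣ compMonomialCurve a U F := by
  set shift : MvPolynomial σ R →ₐ[R] MvPolynomial σ R :=
    MvPolynomial.aeval fun j => MvPolynomial.X j + MvPolynomial.C (x j)
  have hshift : compMonomialCurve a U =
      (MvPolynomial.aeval fun j => C (a j) * X ^ U j - C (x j)).comp shift :=
    MvPolynomial.algHom_ext fun j => by simp [shift, compMonomialCurve]
  rw [hshift, AlgHom.comp_apply, MvPolynomial.aeval_def, MvPolynomial.eval₂_eq']
  refine dvd_sum fun α hα => Dvd.dvd.mul_left ?_ _
  have hM : M ≤ ∑ j, α j := by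
    rw [← Finsupp.degree_eq_sum]
    by_contra! hlt
    exact MvPolynomial.mem_support_iff.1 hα (hF α (mem_jetIndices.2 hlt))
  refine (pow_dvd_pow _ hM).trans ?_
  rw [← prod_pow_eq_pow_sum]
  refine prod_dvd_prod_of_dvd _ _ fun j _ => pow_dvd_pow_of_dvd (dvd_iff_isRoot.2 ?_) _
  simp [hx]

end MonomialCurves

section LineFunctional

variable {N : ℕ} [NeZero N] {σ R S : Type*} [CommRing R] [CommRing S]

/-- The monic polynomial with root `χ s` of multiplicity `f (b + s • U)`, for every `s`. -/
noncomputable def lineModulus (χ : AddChar (ZMod N) R) (f : (σ → ZMod N) → ℕ) (b : σ → ZMod N)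
    (U : σ → ℕ) : R[X] :=
  ∏ s : ZMod N, (X - C (χ s)) ^ f (b + s • fun j => (U j : ZMod N))

/-- The functional `F ↦ coeff i (r (1 + X))`, where `r` is the remainder modulo `lineModulus` of the
restriction of `F` to the monomial curve of the line `b + s • U`. It depends only on the jets of
order `f x` of `F` at the points `χ ∘ x` with `x` on that line. -/
noncomputable def lineFunctional (χ : AddChar (ZMod N) R) (f : (σ → ZMod N) → ℕ)
    (b : σ → ZMod N) (U : σ → ℕ) (i : ℕ) : MvPolynomial σ R →ₗ[R] R :=
  lcoeff R i ∘ₗ taylor 1 ∘ₗ modByMonicHom (lineModulus χ f b U) ∘ₗ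
    (compMonomialCurve (χ ∘ b) U).toLinearMap

theorem lineFunctional_apply (χ : AddChar (ZMod N) R) (f : (σ → ZMod N) → ℕ) (b : σ → ZMod N)
    (U : σ → ℕ) (i : ℕ) (F : MvPolynomial σ R) :
    lineFunctional χ f b U i F =
      (taylor 1 (compMonomialCurve (χ ∘ b) U F %ₘ lineModulus χ f b U)).coeff i :=
  rfl

theorem monic_lineModulus (χ : AddChar (ZMod N) R) (f : (σ → ZMod N) → ℕ) (b : σ → ZMod N)
    (U : σ → ℕ) : (lineModulus χ f b U).Monic :=
  monic_prod_of_monic _ _ fun _ _ => (monic_X_sub_C _).pow _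

theorem map_lineModulus (φ : R →+* S) (χ : AddChar (ZMod N) R) (f : (σ → ZMod N) → ℕ)
    (b : σ → ZMod N) (U : σ → ℕ) :
    (lineModulus χ f b U).map φ = lineModulus ((φ : R →* S).compAddChar χ) f b U := by
  simp [lineModulus, Polynomial.map_prod]

theorem map_lineFunctional (φ : R →+* S) (χ : AddChar (ZMod N) R) (f : (σ → ZMod N) → ℕ)
    (b : σ → ZMod N) (U : σ → ℕ) (i : ℕ) (F : MvPolynomial σ R) :
    φ (lineFunctional χ f b U i F) =
      lineFunctional ((φ : R →* S).compAddChar χ) f b U i (F.map φ) := by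
  rw [lineFunctional_apply, lineFunctional_apply, ← coeff_map, map_taylor,
    map_modByMonic _ (monic_lineModulus χ f b U), map_lineModulus, map_compMonomialCurve, map_one]
  rfl

theorem lineFunctional_one_monomial [Fintype σ] {f : (σ → ZMod N) → ℕ} {b : σ → ZMod N}
    {U : σ → ℕ} {i : ℕ} (hi : i < ∑ s : ZMod N, f (b + s • fun j => (U j : ZMod N)))
    (d : σ →₀ ℕ) :
    lineFunctional (1 : AddChar (ZMod N) R) f b U i (MvPolynomial.monomial d 1) =
      ((U ⬝ᵥ d).choose i : R) := by
  have hdiv := modByMonic_add_div (X ^ (U ⬝ᵥ d) : R[X])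
    (lineModulus (1 : AddChar (ZMod N) R) f b U)
  have hcoeff := congrArg (fun r => (taylor 1 r).coeff i) hdiv
  have htaylor : taylor 1 (lineModulus (1 : AddChar (ZMod N) R) f b U) =
      X ^ ∑ s : ZMod N, f (b + s • fun j => (U j : ZMod N)) := by
    simp [lineModulus, prod_pow_eq_pow_sum, taylor_pow]
  simp only [map_add, taylor_mul, htaylor, coeff_add, coeff_X_pow_mul', if_neg hi.not_ge, add_zero,
    taylor_X_pow, C_1, coeff_X_add_one_pow] at hcoeff
  rw [lineFunctional_apply, compMonomialCurve_monomial, ← hcoeff]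
  simp

theorem lineFunctional_eq_zero {K : Type*} [Field K] [Fintype σ] [DecidableEq σ]
    {χ : AddChar (ZMod N) K} (hχ : Function.Injective χ) {f : (σ → ZMod N) → ℕ}
    {F : MvPolynomial σ K} (hF : ∀ x, ∀ α ∈ jetIndices σ (f x), mvTaylorCoeff (χ ∘ x) α F = 0)
    (b : σ → ZMod N) (U : σ → ℕ) (i : ℕ) : lineFunctional χ f b U i F = 0 := by
  have hdvd : lineModulus χ f b U ∣ compMonomialCurve (χ ∘ b) U F := by
    refine prod_dvd_of_coprime
      (fun s _ t _ hst => (pairwise_coprime_X_sub_C hχ hst).pow) fun s _ => ?_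
    refine X_sub_C_pow_dvd_compMonomialCurve (fun j => ?_) (hF _)
    simp only [Function.comp_apply, Pi.add_apply, Pi.smul_apply, smul_eq_mul, χ.map_add_eq_mul,
      ← χ.map_nsmul_eq_pow, nsmul_eq_mul, mul_comm]
  rw [lineFunctional_apply, (modByMonic_eq_zero_iff_dvd (monic_lineModulus χ f b U)).2 hdvd,
    map_zero, coeff_zero]

theorem card_le_of_linearIndependent_lineFunctional {K : Type*} [Field K] [Fintype σ]
    [DecidableEq σ] {χ : AddChar (ZMod N) K} (hχ : Function.Injective χ) (f : (σ → ZMod N) → ℕ)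
    {T : Type*} [Fintype T] {b : T → σ → ZMod N} {U : T → σ → ℕ} {i : T → ℕ}
    (hind : LinearIndependent K fun t => lineFunctional χ f (b t) (U t) (i t)) :
    Fintype.card T ≤ ∑ x, #(jetIndices σ (f x)) := by
  classical
  let jet : (Σ x, jetIndices σ (f x)) → MvPolynomial σ K →ₗ[K] K :=
    fun y => mvTaylorCoeff (χ ∘ y.1) y.2
  have hspan : ∀ t, lineFunctional χ f (b t) (U t) (i t) ∈ Submodule.span K (Set.range jet) := by
    refine fun t => mem_span_of_iInf_ker_le_ker fun F hF => ?_
    simp only [Submodule.mem_iInf, LinearMap.mem_ker] at hF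
    exact lineFunctional_eq_zero hχ (fun x α hα => hF ⟨x, α, hα⟩) _ _ _
  have hcard := linearIndependent_le_span' _ hind (Set.range jet) (Set.range_subset_iff.2 hspan)
  rw [Cardinal.mk_fintype, Nat.cast_le] at hcard
  calc Fintype.card T ≤ Fintype.card (Set.range jet) := hcard
    _ ≤ Fintype.card (Σ x, jetIndices σ (f x)) := Fintype.card_range_le jet
    _ = ∑ x, #(jetIndices σ (f x)) := by simp only [Fintype.card_sigma, Fintype.card_coe]

/-- The binomial coefficients are the images modulo `p` of the values of line functionals. -/
theorem card_le_sum_card_jetIndices [Fintype σ] [DecidableEq σ] {p k : ℕ} [Fact p.Prime]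
    {f : (σ → ZMod (p ^ (k + 1))) → ℕ} {T V : Type*} [Fintype T] [Finite V]
    {b : T → σ → ZMod (p ^ (k + 1))} {U : T → σ → ℕ} {i : T → ℕ}
    (hi : ∀ t, i t < ∑ s : ZMod (p ^ (k + 1)), f (b t + s • fun j => (U t j : ZMod (p ^ (k + 1)))))
    (d : V → σ →₀ ℕ)
    (hind : LinearIndependent (ZMod p) fun t v => ((U t ⬝ᵥ d v).choose (i t) : ZMod p)) :
    Fintype.card T ≤ ∑ x, #(jetIndices σ (f x)) := by
  cases nonempty_fintype V
  obtain ⟨O, _, _, φ, χ, hχ, hφχ⟩ := exists_addChar_injective_map_eq_one p k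
  have hone : (φ : O →* ZMod p).compAddChar χ = 1 := DFunLike.ext _ _ hφχ
  set ι : O →+* FractionRing O := algebraMap O (FractionRing O)
  have hι : Function.Injective ι := IsFractionRing.injective O (FractionRing O)
  let value : Matrix T V O := of fun t v =>
    lineFunctional χ f (b t) (U t) (i t) (MvPolynomial.monomial (d v) 1)
  have hvalue : (value.map φ).row = fun t v => ((U t ⬝ᵥ d v).choose (i t) : ZMod p) := by
    ext t v
    simp [value, map_lineFunctional, hone, lineFunctional_one_monomial (hi t)]
  have hrow : LinearIndependent (FractionRing O) (value.map ι).row :=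
    linearIndependent_row_map_of_surjective (ZMod.ringHom_surjective φ) hι value (hvalue ▸ hind)
  refine card_le_of_linearIndependent_lineFunctional
    (χ := (ι : O →* FractionRing O).compAddChar χ) (hι.comp hχ) f (b := b) (U := U) (i := i) ?_
  refine LinearIndependent.of_comp
    (LinearMap.pi fun v => LinearMap.applyₗ (MvPolynomial.monomial (d v) 1)) ?_
  convert! hrow using 1
  ext t v
  simp [value, map_lineFunctional]

end LineFunctional

section Vanishing

theorem sum_range_ordProj_succ_le {p : ℕ} (hp : p.Prime) {M d : ℕ} (hd : d < p ^ M) :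
    ∑ i ∈ range d, p ^ (i + 1).factorization p ≤ M * d := by
  calc ∑ i ∈ range d, p ^ (i + 1).factorization p
      ≤ ∑ i ∈ range d, ∑ s ∈ range M, if p ^ s ∣ i + 1 then p ^ s else 0 := by
        refine sum_le_sum fun i hi => ?_
        have hdvd := Nat.ordProj_dvd (i + 1) p
        have hlt : p ^ (i + 1).factorization p < p ^ M :=
          (Nat.le_of_dvd i.succ_pos hdvd).trans_lt
            ((Nat.succ_le_of_lt (mem_range.1 hi)).trans_lt hd)
        calc p ^ (i + 1).factorization p
            = if p ^ (i + 1).factorization p ∣ i + 1 then p ^ (i + 1).factorization p else 0 :=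
              (if_pos hdvd).symm
          _ ≤ _ := single_le_sum (f := fun s => if p ^ s ∣ i + 1 then p ^ s else 0)
              (fun _ _ => Nat.zero_le _) (mem_range.2 ((Nat.pow_lt_pow_iff_right hp.one_lt).1 hlt))
    _ = ∑ s ∈ range M, d / p ^ s * p ^ s := by
        rw [sum_comm]
        simp only [← sum_filter, sum_const, Nat.card_multiples, smul_eq_mul]
    _ ≤ ∑ _s ∈ range M, d := sum_le_sum fun _ _ => Nat.div_mul_le_self d _
    _ = M * d := by rw [sum_const, card_range, smul_eq_mul]

theorem rootMultiplicity_prod {R ι : Type*} [CommRing R] [IsDomain R] {s : Finset ι} {f : ι → R[X]}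
    (hf : ∏ i ∈ s, f i ≠ 0) (a : R) :
    (∏ i ∈ s, f i).rootMultiplicity a = ∑ i ∈ s, (f i).rootMultiplicity a := by
  classical
  simp only [← count_roots, roots_prod f s hf, Multiset.count_bind, sum_eq_multiset_sum]

theorem prod_X_pow_sub_X_pow_ne_zero {σ κ : Type*} [Fintype σ] [Field κ] (d : σ → ℕ) :
    (∏ j, ∏ i ∈ range (d j), (X ^ d j - X ^ i) : κ[X]) ≠ 0 :=
  prod_ne_zero_iff.2 fun j _ => prod_ne_zero_iff.2 fun i hi h0 =>
    (mem_range.1 hi).ne' (by simpa using congrArg natDegree (sub_eq_zero.1 h0))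

section CharP

variable {κ : Type*} [Field κ] (p : ℕ) [Fact p.Prime] [CharP κ p]

theorem rootMultiplicity_one_X_pow_sub_one {m : ℕ} (hm : m ≠ 0) :
    (X ^ m - 1 : κ[X]).rootMultiplicity 1 = p ^ m.factorization p := by
  set m' := m / p ^ m.factorization p
  have hm' : (m' : κ) ≠ 0 := fun h0 =>
    Nat.not_dvd_ordCompl Fact.out hm ((CharP.cast_eq_zero_iff κ p m').1 h0)
  have hne : (X ^ m' - 1 : κ[X]) ≠ 0 :=
    X_pow_sub_C_ne_zero (Nat.pos_of_ne_zero fun h0 => hm' (by rw [h0, Nat.cast_zero])) 1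
  have hsimple : (X ^ m' - 1 : κ[X]).rootMultiplicity 1 = 1 :=
    le_antisymm (rootMultiplicity_le_one_of_separable (X_pow_sub_one_separable_iff.2 hm') 1)
      ((rootMultiplicity_pos hne).2 (by simp))
  have hexpand : (X ^ m - 1 : κ[X]) = expand κ (p ^ m.factorization p) (X ^ m' - 1) := by
    rw [map_sub, map_pow, expand_X, map_one, ← pow_mul, Nat.ordProj_mul_ordCompl_eq_self]
  rw [hexpand, rootMultiplicity_expand_pow, one_pow, hsimple, mul_one]

theorem rootMultiplicity_one_X_pow_sub_X_pow {i d : ℕ} (hi : i < d) :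
    (X ^ d - X ^ i : κ[X]).rootMultiplicity 1 = p ^ (d - i).factorization p := by
  have hfactor : (X ^ d - X ^ i : κ[X]) = X ^ i * (X ^ (d - i) - 1) := by
    rw [mul_sub, mul_one, ← pow_add, Nat.add_sub_cancel' hi.le]
  have hne : (X ^ i * (X ^ (d - i) - 1) : κ[X]) ≠ 0 :=
    mul_ne_zero (pow_ne_zero _ X_ne_zero) (X_pow_sub_C_ne_zero (Nat.sub_pos_of_lt hi) 1)
  rw [hfactor, rootMultiplicity_mul hne,
    rootMultiplicity_eq_zero (by simp : ¬ (X ^ i : κ[X]).IsRoot 1), zero_add,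
    rootMultiplicity_one_X_pow_sub_one p (Nat.sub_ne_zero_of_lt hi)]

theorem rootMultiplicity_one_prod_X_pow_sub_X_pow_le {σ : Type*} [Fintype σ] {d : σ →₀ ℕ} {M : ℕ}
    (hd : d.degree < p ^ M) :
    (∏ j, ∏ i ∈ range (d j), (X ^ d j - X ^ i) : κ[X]).rootMultiplicity 1 ≤ M * d.degree := by
  have hne := prod_X_pow_sub_X_pow_ne_zero (κ := κ) d
  rw [rootMultiplicity_prod hne, Finsupp.degree_eq_sum, mul_sum]
  refine sum_le_sum fun j _ => ?_
  calc (∏ i ∈ range (d j), (X ^ d j - X ^ i) : κ[X]).rootMultiplicity 1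
      = ∑ i ∈ range (d j), p ^ (d j - i).factorization p := by
        rw [rootMultiplicity_prod (prod_ne_zero_iff.1 hne j (mem_univ j))]
        exact sum_congr rfl fun i hi =>
          rootMultiplicity_one_X_pow_sub_X_pow p (mem_range.1 hi)
    _ = ∑ i ∈ range (d j), p ^ (i + 1).factorization p := by
        rw [← sum_range_reflect]
        refine sum_congr rfl fun i hi => ?_
        rw [show d j - (d j - 1 - i) = i + 1 by have := mem_range.1 hi; omega]
    _ ≤ M * d j := sum_range_ordProj_succ_le Fact.out ((d.le_degree j).trans_lt hd)

end CharP

theorem exists_smul_eq_and_not_dvd {σ : Type*} [Finite σ] [Nonempty σ] {p : ℕ} (hp : p.Prime)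
    (U : σ → ℕ) : ∃ (m : ℕ) (U' : σ → ℕ), m • U' = U ∧ ∃ j, ¬ p ∣ U' j := by
  cases nonempty_fintype σ
  obtain ⟨U', hU', hgcd⟩ := extract_gcd U univ_nonempty
  refine ⟨univ.gcd U, U', funext fun j => (hU' j (mem_univ j)).symm, ?_⟩
  by_contra! hall
  exact hp.one_lt.ne' (Nat.dvd_one.1 (hgcd ▸ dvd_gcd fun j _ => hall j))

variable {σ R : Type*} [Finite σ] [CommRing R]

theorem X_sub_one_pow_dvd_compMonomialCurve [Nonempty σ] {p : ℕ} (hp : p.Prime) {A : ℕ}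
    {F : MvPolynomial σ R}
    (h : ∀ U : σ → ℕ, (∃ j, ¬ p ∣ U j) → (X - 1) ^ A ∣ compMonomialCurve 1 U F) (U : σ → ℕ) :
    (X - 1) ^ A ∣ compMonomialCurve 1 U F := by
  obtain ⟨m, U', rfl, hU'⟩ := exists_smul_eq_and_not_dvd hp U
  have hexpand : (compMonomialCurve 1 (m • U') : MvPolynomial σ R →ₐ[R] R[X]) =
      (expand R m).comp (compMonomialCurve 1 U') :=
    MvPolynomial.algHom_ext fun j => by simp [compMonomialCurve, pow_mul]
  have hdvd : (X - 1 : R[X]) ∣ X ^ m - 1 := by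
    simpa only [one_pow] using sub_dvd_pow_sub_pow (X : R[X]) 1 m
  calc (X - 1 : R[X]) ^ A ∣ (X ^ m - 1) ^ A := pow_dvd_pow_of_dvd hdvd A
    _ = expand R m ((X - 1) ^ A) := by simp
    _ ∣ expand R m (compMonomialCurve 1 U' F) := _root_.map_dvd (expand R m) (h U' hU')
    _ = compMonomialCurve 1 (m • U') F := by rw [hexpand, AlgHom.comp_apply]

/-- The sum is linear in `W`, and for `W` the monomial with exponent `U` it is
`compMonomialCurve 1 U F`. -/
theorem dvd_sum_C_coeff_mul_eval {D : R[X]} {F : MvPolynomial σ R}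
    (h : ∀ U : σ → ℕ, D ∣ compMonomialCurve 1 U F) (W : MvPolynomial σ R[X]) :
    D ∣ ∑ d ∈ F.support, C (F.coeff d) * MvPolynomial.eval (fun j => X ^ d j) W := by
  cases nonempty_fintype σ
  induction W using MvPolynomial.induction_on' with
  | monomial e c =>
    have hcurve : compMonomialCurve 1 e F =
        ∑ d ∈ F.support, C (F.coeff d) * X ^ (⇑e ⬝ᵥ d) := by
      conv_lhs => rw [F.as_sum, map_sum]
      simp [compMonomialCurve_monomial]
    convert! (h e).mul_left c using 1
    rw [hcurve, mul_sum]
    refine sum_congr rfl fun d _ => ?_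
    rw [MvPolynomial.eval_monomial, e.prod_fintype _ fun _ => pow_zero _, mul_left_comm]
    simp only [← pow_mul, prod_pow_eq_pow_sum, dotProduct, mul_comm (d _)]
  | add W W' hW hW' => simpa only [map_add, mul_add, sum_add_distrib] using dvd_add hW hW'

theorem eq_zero_of_X_sub_one_pow_dvd_compMonomialCurve [Nonempty σ] {κ : Type*} [Field κ] {p : ℕ}
    [Fact p.Prime] [CharP κ p] {A M : ℕ} {F : MvPolynomial σ κ}
    (hdeg : ∀ d ∈ F.support, d.degree < p ^ M) (hA : ∀ d ∈ F.support, M * d.degree < A)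
    (h : ∀ U : σ → ℕ, (∃ j, ¬ p ∣ U j) → (X - 1) ^ A ∣ compMonomialCurve 1 U F) : F = 0 := by
  cases nonempty_fintype σ
  by_contra hF
  obtain ⟨d, hd, hmax⟩ := F.support.exists_max_image Finsupp.degree
    (MvPolynomial.support_nonempty.2 hF)
  let W : MvPolynomial σ κ[X] :=
    ∏ j, ∏ i ∈ range (d j), (MvPolynomial.X j - MvPolynomial.C (X ^ i))
  have hWeval : ∀ e : σ →₀ ℕ, W.eval (fun j => X ^ e j) =
      ∏ j, ∏ i ∈ range (d j), (X ^ e j - X ^ i) := fun e => by simp [W, map_prod]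
  have hW : ∀ e ∈ F.support, e ≠ d → W.eval (fun j => X ^ e j) = 0 := by
    intro e he hne
    obtain ⟨j, hj⟩ : ∃ j, e j < d j := by
      by_contra! hle
      obtain ⟨c, rfl⟩ := exists_add_of_le (show d ≤ e from hle)
      have hc : d.degree + c.degree ≤ d.degree := map_add Finsupp.degree d c ▸ hmax _ he
      exact hne (by rw [(Finsupp.degree_eq_zero_iff c).1 (by omega), add_zero])
    rw [hWeval]
    exact prod_eq_zero (mem_univ j) (prod_eq_zero (mem_range.2 hj) (sub_self _))
  have hdvd := dvd_sum_C_coeff_mul_eval (X_sub_one_pow_dvd_compMonomialCurve Fact.out h) W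
  rw [sum_eq_single_of_mem d hd fun e he hne => by rw [hW e he hne, mul_zero], hWeval,
    (isUnit_C.2 (MvPolynomial.mem_support_iff.1 hd).isUnit).dvd_mul_left] at hdvd
  have hroot := (le_rootMultiplicity_iff (prod_X_pow_sub_X_pow_ne_zero (κ := κ) d)).2 hdvd
  exact (hA d hd).not_ge (hroot.trans (rootMultiplicity_one_prod_X_pow_sub_X_pow_le p (hdeg d hd)))

end Vanishing

section ChooseRow

theorem periodic_natCast_choose {κ : Type*} [CommRing κ] (p : ℕ) [Fact p.Prime] [CharP κ p]
    {K i : ℕ} (hi : i < p ^ K) : Function.Periodic (fun w : ℕ => (w.choose i : κ)) (p ^ K) := by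
  intro w
  simp only [← coeff_X_add_one_pow κ]
  rw [pow_add, add_pow_char_pow, one_pow, mul_add, mul_one, coeff_add, coeff_mul_X_pow',
    if_neg hi.not_ge, zero_add]

/-- For `t = (u, i)`, the coefficients of `(X - 1) ^ i` in the restrictions of the monomials with
exponents `v` to the curve `X ^ u`. In characteristic `p`, these make sense for `u` and `v` modulo
`q` when `q` is a power of `p` exceeding `i`. -/
def chooseRow {σ : Type*} [Fintype σ] (κ : Type*) [NatCast κ] {q : ℕ}
    (t : (σ → ZMod q) × Fin q) (v : σ → ZMod q) : κ :=
  ((t.1 ⬝ᵥ v).val.choose t.2 : κ)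

theorem chooseRow_natCast {σ κ : Type*} [Fintype σ] [CommRing κ] {p K : ℕ} [Fact p.Prime]
    [CharP κ p] (U d : σ → ℕ) (i : Fin (p ^ K)) :
    chooseRow κ (fun j => (U j : ZMod (p ^ K)), i) (fun j => (d j : ZMod (p ^ K))) =
      ((U ⬝ᵥ d).choose i : κ) := by
  have hcast : (fun j => (U j : ZMod (p ^ K))) ⬝ᵥ (fun j => (d j : ZMod (p ^ K))) =
      ((U ⬝ᵥ d : ℕ) : ZMod (p ^ K)) := by
    simp [dotProduct]
  rw [chooseRow, hcast, ZMod.val_natCast]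
  exact (periodic_natCast_choose p i.2).map_mod_nat _

theorem exists_linearIndepOn_image_subset_span {κ V ι : Type*} [Field κ] [AddCommGroup V]
    [Module κ V] (φ : ι → V) (S : Set ι) (level : ι → ℕ) (A : ℕ) :
    ∃ B ⊆ {t ∈ S | level t < A}, LinearIndepOn κ φ B ∧ ∀ A' ≤ A,
      φ '' {t ∈ S | level t < A'} ⊆ Submodule.span κ (φ '' {t ∈ B | level t < A'}) := by
  induction A with
  | zero => exact ⟨∅, Set.empty_subset _, linearIndepOn_empty _ _, by simp⟩
  | succ A ih =>
    obtain ⟨B, hBS, hBind, hBspan⟩ := ih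
    obtain ⟨B', hB'S, hBB', hspan, hB'ind⟩ := exists_linearIndepOn_extension hBind
      (t := {t ∈ S | level t < A + 1}) fun t ht => ⟨(hBS ht).1, Nat.lt_succ_of_lt (hBS ht).2⟩
    refine ⟨B', hB'S, hB'ind, fun A' hA' => ?_⟩
    rcases hA'.lt_or_eq with hlt | rfl
    · exact (hBspan A' (Nat.le_of_lt_succ hlt)).trans
        (Submodule.span_mono (Set.image_mono fun t ht => ⟨hBB' ht.1, ht.2⟩))
    · rwa [Set.sep_eq_self_iff_mem_true.2 fun t ht => (hB'S ht).2]

variable {σ κ : Type*} [Fintype σ] [DecidableEq σ] [Nonempty σ] [Field κ] {p K M A D : ℕ}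
  [Fact p.Prime] [CharP κ p]

theorem span_chooseRow_natCast_eq_top (hM : 0 < M) (hAM : A ≤ p ^ M) (hAK : A ≤ p ^ K)
    (hD : ∀ s < D, M * s < A) :
    Submodule.span κ (Set.range fun (t : {t : (σ → ZMod (p ^ K)) × Fin (p ^ K) //
      (∃ j, IsUnit (t.1 j)) ∧ (t.2 : ℕ) < A}) (d : jetIndices σ D) =>
        chooseRow κ t.1 fun j => (d.1 j : ZMod (p ^ K))) = ⊤ := by
  refine span_range_eq_top_of_forall_dotProduct_eq_zero fun g hg => ?_
  let F : MvPolynomial σ κ := ∑ d : jetIndices σ D, MvPolynomial.monomial d.1 (g d)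
  have hcoeff : ∀ d : jetIndices σ D, F.coeff d = g d := fun d => by
    simp [F, MvPolynomial.coeff_sum, MvPolynomial.coeff_monomial]
  have hsupport : ∀ d ∈ F.support, M * d.degree < A := by
    intro d hd
    obtain ⟨e, -, he⟩ := mem_biUnion.1 (MvPolynomial.support_sum hd)
    rw [mem_singleton.1 (MvPolynomial.support_monomial_subset he)]
    exact hD _ (mem_jetIndices.1 e.2)
  have hdvd : ∀ U : σ → ℕ, (∃ j, ¬ p ∣ U j) → (X - 1) ^ A ∣ compMonomialCurve 1 U F := by
    rintro U ⟨j, hj⟩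
    rw [← C_1, X_sub_C_pow_dvd_iff, X_pow_dvd_iff]
    intro i hi
    have hunit : IsUnit ((U j : ℕ) : ZMod (p ^ K)) := (ZMod.isUnit_iff_coprime _ _).2
      (((Nat.Prime.coprime_iff_not_dvd Fact.out).2 hj).symm.pow_right K)
    rw [← hg ⟨(fun j => (U j : ZMod (p ^ K)), ⟨i, hi.trans_le hAK⟩), ⟨j, hunit⟩, hi⟩]
    simp only [F, map_sum, compMonomialCurve_monomial, chooseRow_natCast, dotProduct]
    simp [coeff_X_add_one_pow, Polynomial.sum_comp]
  have hF := eq_zero_of_X_sub_one_pow_dvd_compMonomialCurve (M := M)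
    (fun d hd => (Nat.le_mul_of_pos_left _ hM).trans_lt ((hsupport d hd).trans_le hAM))
    hsupport hdvd
  exact funext fun d => by rw [← hcoeff, hF, MvPolynomial.coeff_zero, Pi.zero_apply]

theorem card_jetIndices_le_of_chooseRow_mem_span (hM : 0 < M) (hAM : A ≤ p ^ M) (hAK : A ≤ p ^ K)
    (hD : ∀ s < D, M * s < A) {B : Finset ((σ → ZMod (p ^ K)) × Fin (p ^ K))}
    (hB : ∀ t : (σ → ZMod (p ^ K)) × Fin (p ^ K), (∃ j, IsUnit (t.1 j)) → (t.2 : ℕ) < A →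
      chooseRow κ t ∈ Submodule.span κ (chooseRow κ '' B)) :
    #(jetIndices σ D) ≤ #B := by
  classical
  let restrict : ((σ → ZMod (p ^ K)) → κ) →ₗ[κ] jetIndices σ D → κ :=
    LinearMap.funLeft κ κ fun d j => (d.1 j : ZMod (p ^ K))
  have htop :
      Submodule.span κ (B.image (restrict ∘ chooseRow κ) : Set (jetIndices σ D → κ)) = ⊤ := by
    rw [eq_top_iff, ← span_chooseRow_natCast_eq_top hM hAM hAK hD, Submodule.span_le, coe_image,
      Set.image_comp, ← Submodule.map_span]
    rintro _ ⟨t, rfl⟩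
    exact Submodule.mem_map_of_mem (hB t.1 t.2.1 t.2.2)
  calc #(jetIndices σ D) = Module.finrank κ (jetIndices σ D → κ) := by simp
    _ = Module.finrank κ (Submodule.span κ
          (B.image (restrict ∘ chooseRow κ) : Set (jetIndices σ D → κ))) := by
        rw [htop, finrank_top]
    _ ≤ #(B.image (restrict ∘ chooseRow κ)) := finrank_span_finset_le_card _
    _ ≤ #B := card_image_le

end ChooseRow

section Averaging

section GeneralLinear

variable {σ R : Type*} [Fintype σ] [DecidableEq σ] [CommRing R]

theorem exists_units_mulVec_single_eq {u : σ → R} {i : σ} (hu : IsUnit (u i)) :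
    ∃ g : (Matrix σ σ R)ˣ, g.1 *ᵥ Pi.single i 1 = u := by
  have hdet : ((1 : Matrix σ σ R).updateCol i u).det = u i := by
    rw [← cramer_apply, cramer_one, Module.End.one_apply]
  obtain ⟨g, hg⟩ := (isUnit_iff_isUnit_det _).2 (hdet ▸ hu)
  refine ⟨g, ?_⟩
  rw [hg, mulVec_single_one]
  exact funext fun j => updateCol_self

theorem exists_units_mulVec_eq {u w : σ → R} (hu : ∃ i, IsUnit (u i)) (hw : ∃ i, IsUnit (w i)) :
    ∃ g : (Matrix σ σ R)ˣ, g.1 *ᵥ u = w := by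
  have hone : ∀ v : σ → R, (∃ i, IsUnit (v i)) → ∃ g : (Matrix σ σ R)ˣ, g.1 *ᵥ v = 1 := by
    rintro v ⟨i, hi⟩
    obtain ⟨g, hg⟩ := exists_units_mulVec_single_eq hi
    obtain ⟨h, hh⟩ := exists_units_mulVec_single_eq (u := (1 : σ → R)) (i := i) isUnit_one
    refine ⟨h * g⁻¹, ?_⟩
    rw [← hg, mulVec_mulVec, Units.val_mul, Units.inv_mul_cancel_right, hh]
  obtain ⟨g, hg⟩ := hone u hu
  obtain ⟨h, hh⟩ := hone w hw
  refine ⟨h⁻¹ * g, ?_⟩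
  rw [Units.val_mul, ← mulVec_mulVec, hg, ← hh, mulVec_mulVec, Units.inv_mul, one_mulVec]

end GeneralLinear

variable {N n : ℕ}

theorem isPrimitiveVec_iff_exists_isUnit [IsLocalRing (ZMod N)] {u : Fin n → ZMod N} :
    IsPrimitiveVec u ↔ ∃ i, IsUnit (u i) := by
  constructor
  · rintro ⟨v, hv⟩
    obtain ⟨i, -, hi⟩ := IsLocalRing.exists_of_isUnit_sum (hv ▸ isUnit_one)
    exact ⟨i, isUnit_of_mul_isUnit_right hi⟩
  · rintro ⟨i, c, hc⟩
    exact ⟨Pi.single i ↑c⁻¹, by simp [Pi.single_apply, ← hc]⟩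

theorem IsPrimitiveVec.units_mulVec {u : Fin n → ZMod N} (hu : IsPrimitiveVec u)
    (g : (Matrix (Fin n) (Fin n) (ZMod N))ˣ) : IsPrimitiveVec (g.1 *ᵥ u) := by
  obtain ⟨v, hv⟩ := hu
  refine ⟨v ᵥ* g⁻¹.1, Eq.trans ?_ hv⟩
  change (v ᵥ* g⁻¹.1) ⬝ᵥ (g.1 *ᵥ u) = v ⬝ᵥ u
  rw [← dotProduct_mulVec, mulVec_mulVec, Units.inv_mul, one_mulVec]

variable [NeZero N] {P : Finset (Fin n → ZMod N)}

theorem IsProjRepSet.eq_of_eq_smul (hP : IsProjRepSet N n P) {w w' : Fin n → ZMod N} (hw : w ∈ P)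
    (hw' : w' ∈ P) (c : (ZMod N)ˣ) (h : w = (c : ZMod N) • w') : w = w' :=
  (hP.2 w (hP.1 w hw)).unique ⟨hw, 1, by rw [Units.val_one, one_smul]⟩ ⟨hw', c, h⟩

theorem IsProjRepSet.sum_units_mulVec (hP : IsProjRepSet N n P) {F : (Fin n → ZMod N) → ℕ}
    (hF : ∀ (c : (ZMod N)ˣ) (w), F ((c : ZMod N) • w) = F w)
    (g : (Matrix (Fin n) (Fin n) (ZMod N))ˣ) : ∑ w ∈ P, F (g.1 *ᵥ w) = ∑ w ∈ P, F w := by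
  choose rep hrep c hc using fun w : P => (hP.2 _ ((hP.1 w w.2).units_mulVec g)).exists
  let perm : P → P := fun w => ⟨rep w, hrep w⟩
  have hinj : Function.Injective perm := by
    intro w w' hww'
    have hrepeq : rep w = rep w' := congrArg Subtype.val hww'
    have hsmul : g.1 *ᵥ w.1 = g.1 *ᵥ ((c w * (c w')⁻¹ : (ZMod N)ˣ) : ZMod N) • w'.1 := by
      rw [mulVec_smul, hc w', ← hrepeq, smul_smul, ← Units.val_mul, inv_mul_cancel_right, hc w]
    exact Subtype.ext (hP.eq_of_eq_smul w.2 w'.2 _ (mulVec_injective_of_isUnit g.isUnit hsmul))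
  calc ∑ w ∈ P, F (g.1 *ᵥ w) = ∑ w : P, F (perm w) := by
        rw [← sum_coe_sort P]
        exact sum_congr rfl fun w _ => by rw [hc, hF]
    _ = ∑ w ∈ P, F w := by
        rw [(Finite.injective_iff_bijective.1 hinj).sum_comp fun w : P => F w, sum_coe_sort P]

variable {R : Type*} [CommRing R] [Fintype (Matrix (Fin n) (Fin n) R)ˣ]

theorem IsProjRepSet.card_mul_sum_units_mulVec [IsLocalRing (ZMod N)] (hP : IsProjRepSet N n P)
    {F : (Fin n → ZMod N) → ℕ} (hF : ∀ (c : (ZMod N)ˣ) (w), F ((c : ZMod N) • w) = F w)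
    (φ : R →+* ZMod N) [IsLocalHom φ] {u : Fin n → R} (hu : ∃ i, IsUnit (u i)) :
    #P * ∑ g : (Matrix (Fin n) (Fin n) R)ˣ, F (φ ∘ (g.1 *ᵥ u)) =
      Fintype.card (Matrix (Fin n) (Fin n) R)ˣ * ∑ w ∈ P, F w := by
  have hsum : ∀ w ∈ P, ∑ g : (Matrix (Fin n) (Fin n) R)ˣ, F (φ ∘ (g.1 *ᵥ u)) =
      ∑ g : (Matrix (Fin n) (Fin n) R)ˣ, F (g.1.map φ *ᵥ w) := by
    intro w hw
    obtain ⟨v, rfl⟩ : ∃ v : Fin n → R, φ ∘ v = w :=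
      (ZMod.ringHom_surjective φ).comp_left w
    obtain ⟨i, hi⟩ := isPrimitiveVec_iff_exists_isUnit.1 (hP.1 _ hw)
    obtain ⟨h, hh⟩ := exists_units_mulVec_eq hu ⟨i, isUnit_of_map_unit φ _ hi⟩
    rw [← (Group.mulRight_bijective h).sum_comp]
    refine sum_congr rfl fun g _ => congrArg F (funext fun j => ?_)
    rw [← hh, Function.comp_apply, ← RingHom.map_mulVec, mulVec_mulVec, Units.val_mul]
  calc #P * ∑ g : (Matrix (Fin n) (Fin n) R)ˣ, F (φ ∘ (g.1 *ᵥ u))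
      = ∑ w ∈ P, ∑ g : (Matrix (Fin n) (Fin n) R)ˣ, F (g.1.map φ *ᵥ w) := by
        rw [← sum_congr rfl hsum, sum_const, smul_eq_mul]
    _ = ∑ _g : (Matrix (Fin n) (Fin n) R)ˣ, ∑ w ∈ P, F w := by
        rw [sum_comm]
        exact sum_congr rfl fun g _ =>
          hP.sum_units_mulVec hF (Units.map (φ.mapMatrix (m := Fin n)).toMonoidHom g)
    _ = Fintype.card (Matrix (Fin n) (Fin n) R)ˣ * ∑ w ∈ P, F w := by
        rw [sum_const, smul_eq_mul, card_univ]

end Averaging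

section KakeyaMaximal

variable {n : ℕ}

theorem exists_sum_eq_fstar {N : ℕ} [NeZero N] (f : (Fin n → ZMod N) → ℕ) (u : Fin n → ZMod N) :
    ∃ a, ∑ t : ZMod N, f (a + t • u) = fstar f u :=
  let ⟨a, _, ha⟩ := exists_mem_eq_sup univ univ_nonempty _
  ⟨a, ha.symm⟩

theorem fstar_units_smul {N : ℕ} [NeZero N] (f : (Fin n → ZMod N) → ℕ) (c : (ZMod N)ˣ)
    (u : Fin n → ZMod N) : fstar f ((c : ZMod N) • u) = fstar f u :=
  sup_congr rfl fun a _ => Fintype.sum_equiv (Units.mulRight c) _ _ fun t => by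
    rw [Units.mulRight_apply, smul_smul]

theorem fstar_nsmul {N : ℕ} [NeZero N] (m : ℕ) (f : (Fin n → ZMod N) → ℕ) (u : Fin n → ZMod N) :
    fstar (m • f) u = m * fstar f u := by
  simp only [fstar, Finset.mul_sup₀, Pi.smul_apply, smul_eq_mul, mul_sum]

theorem isLocalRing_zmod_prime_pow (p k : ℕ) [Fact p.Prime] : IsLocalRing (ZMod (p ^ (k + 1))) :=
  have : Nontrivial (ZMod (p ^ (k + 1))) :=
    ZMod.nontrivial_iff.2 (Nat.one_lt_pow k.succ_ne_zero (Fact.out : p.Prime).one_lt).ne'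
  .of_surjective' (PadicInt.toZModPow (k + 1)) (ZMod.ringHom_surjective _)

variable {p : ℕ} [Fact p.Prime]

theorem linearIndepOn_chooseRow_units_mulVec {σ κ : Type*} [Fintype σ] [DecidableEq σ] [Field κ]
    {q : ℕ} {B : Set ((σ → ZMod q) × Fin q)} (hB : LinearIndepOn κ (chooseRow κ) B)
    (g : (Matrix σ σ (ZMod q))ˣ) : LinearIndepOn κ (fun t => chooseRow κ (g.1 *ᵥ t.1, t.2)) B := by
  have hsurj : Function.Surjective fun v : σ → ZMod q => v ᵥ* g.1 := fun v =>
    ⟨v ᵥ* g⁻¹.1, (vecMul_vecMul _ _ _).trans (by rw [Units.inv_mul, vecMul_one])⟩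
  have hmap := LinearIndependent.map' hB (LinearMap.funLeft κ κ _)
    (LinearMap.ker_eq_bot.2 (LinearMap.funLeft_injective_of_surjective _ _ _ hsurj))
  have hrow : (fun t : B => chooseRow κ (g.1 *ᵥ t.1.1, t.1.2)) =
      LinearMap.funLeft κ κ (fun v => v ᵥ* g.1) ∘ fun t : B => chooseRow κ t.1 := by
    ext t v
    simp only [chooseRow, Function.comp_apply, LinearMap.funLeft_apply]
    rw [dotProduct_comm, dotProduct_mulVec, dotProduct_comm]
  rwa [← hrow] at hmap

theorem exists_adapted_finset_chooseRow {σ : Type*} (κ : Type*) [Fintype σ] [DecidableEq σ]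
    [Nonempty σ] [Field κ] [CharP κ p] (K : ℕ) :
    ∃ B : Finset ((σ → ZMod (p ^ K)) × Fin (p ^ K)), (∀ t ∈ B, ∃ j, IsUnit (t.1 j)) ∧
      LinearIndepOn κ (chooseRow κ) (B : Set ((σ → ZMod (p ^ K)) × Fin (p ^ K))) ∧
      ∀ {A M}, 0 < M → A ≤ p ^ M → A ≤ p ^ K →
        #(jetIndices σ (A ⌈/⌉ M)) ≤ #{t ∈ B | t.2 < A} := by
  obtain ⟨B, hBS, hBind, hBspan⟩ := exists_linearIndepOn_image_subset_span
    (κ := κ) (chooseRow κ (σ := σ) (q := p ^ K)) {t | ∃ j, IsUnit (t.1 j)}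
    (fun t => (t.2 : ℕ)) (p ^ K)
  lift B to Finset ((σ → ZMod (p ^ K)) × Fin (p ^ K)) using B.toFinite
  refine ⟨B, fun t ht => (hBS ht).1, hBind, fun {A M} hM hAM hAK => ?_⟩
  refine card_jetIndices_le_of_chooseRow_mem_span (κ := κ) hM hAM hAK
    (fun s hs => lt_of_not_ge fun hle => hs.not_ge ((ceilDiv_le_iff_le_mul hM).2 hle))
    fun t ht htA => ?_
  rw [coe_filter]
  exact hBspan A hAK ⟨t, ⟨ht, htA⟩, rfl⟩

theorem card_filter_lt_fstar_le {k K : ℕ} (f : (Fin n → ZMod (p ^ (k + 1))) → ℕ)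
    {B : Finset ((Fin n → ZMod (p ^ K)) × Fin (p ^ K))}
    (hB : LinearIndepOn (ZMod p) (chooseRow (ZMod p))
      (B : Set ((Fin n → ZMod (p ^ K)) × Fin (p ^ K))))
    (φ : ZMod (p ^ K) →+* ZMod (p ^ (k + 1))) (g : (Matrix (Fin n) (Fin n) (ZMod (p ^ K)))ˣ) :
    #{t ∈ B | t.2 < fstar f (φ ∘ (g.1 *ᵥ t.1))} ≤ ∑ x, #(jetIndices (Fin n) (f x)) := by
  choose base hbase using exists_sum_eq_fstar f
  set B' := {t ∈ B | t.2 < fstar f (φ ∘ (g.1 *ᵥ t.1))}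
  have hdirection : ∀ t : B', (fun j => (((g.1 *ᵥ t.1.1) j).val : ZMod (p ^ (k + 1)))) =
      φ ∘ (g.1 *ᵥ t.1.1) := fun t => funext fun j => by
    rw [Function.comp_apply, ← map_natCast φ, ZMod.natCast_zmod_val]
  rw [← Fintype.card_coe]
  refine card_le_sum_card_jetIndices (b := fun t : B' => base (φ ∘ (g.1 *ᵥ t.1.1)))
    (U := fun t j => ((g.1 *ᵥ t.1.1) j).val) (i := fun t => t.1.2) (fun t => ?_)
    (fun v : Fin n → ZMod (p ^ K) => Finsupp.equivFunOnFinite.symm fun j => (v j).val) ?_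
  · rw [hdirection, hbase]
    exact (mem_filter.1 t.2).2
  · have hind : LinearIndependent (ZMod p) fun t : B' =>
        chooseRow (ZMod p) (g.1 *ᵥ t.1.1, t.1.2) :=
      (linearIndepOn_chooseRow_units_mulVec hB g).mono fun t ht => (mem_filter.1 ht).1
    convert! hind using 1
    ext t v
    rw [← chooseRow_natCast]
    simp

theorem IsProjRepSet.sum_card_jetIndices_fstar_ceilDiv_le [NeZero n] {k M : ℕ}
    {P : Finset (Fin n → ZMod (p ^ (k + 1)))} (hP : IsProjRepSet (p ^ (k + 1)) n P)
    {f : (Fin n → ZMod (p ^ (k + 1))) → ℕ} (hM : 0 < M) (hf : ∀ w ∈ P, fstar f w ≤ p ^ M) :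
    ∑ w ∈ P, #(jetIndices (Fin n) (fstar f w ⌈/⌉ M)) ≤
      #P * ∑ x, #(jetIndices (Fin n) (f x)) := by
  classical
  have := isLocalRing_zmod_prime_pow p k
  have := isLocalRing_zmod_prime_pow p (M + k)
  set q := p ^ (M + k + 1)
  let φ : ZMod q →+* ZMod (p ^ (k + 1)) := ZMod.castHom (pow_dvd_pow p (by omega)) _
  let G := (Matrix (Fin n) (Fin n) (ZMod q))ˣ
  obtain ⟨B, hBunit, hBind, hBcard⟩ :=
    exists_adapted_finset_chooseRow (σ := Fin n) (p := p) (ZMod p) (M + k + 1)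
  have hlevel : ∀ w ∈ P, fstar f w ≤ q := fun w hw =>
    (hf w hw).trans (Nat.pow_le_pow_right (Fact.out : p.Prime).pos (by omega))
  refine le_of_mul_le_mul_left ?_ (Fintype.card_pos (α := G))
  calc Fintype.card G * ∑ w ∈ P, #(jetIndices (Fin n) (fstar f w ⌈/⌉ M))
      ≤ Fintype.card G * ∑ w ∈ P, #{t ∈ B | t.2 < fstar f w} :=
        Nat.mul_le_mul_left _ (sum_le_sum fun w hw => hBcard hM (hf w hw) (hlevel w hw))
    _ = ∑ t ∈ B, Fintype.card G * ∑ w ∈ P, if t.2 < fstar f w then 1 else 0 := by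
        simp only [card_filter, sum_comm (s := P), mul_sum]
    _ = ∑ t ∈ B, #P * ∑ g : G, if t.2 < fstar f (φ ∘ (g.1 *ᵥ t.1)) then 1 else 0 :=
        sum_congr rfl fun t ht => (hP.card_mul_sum_units_mulVec
          (F := fun w => if t.2 < fstar f w then 1 else 0)
          (fun c w => by rw [fstar_units_smul]) φ (hBunit t ht)).symm
    _ = #P * ∑ g : G, #{t ∈ B | t.2 < fstar f (φ ∘ (g.1 *ᵥ t.1))} := by
        simp only [card_filter, ← mul_sum, sum_comm (s := B)]
    _ ≤ #P * ∑ g : G, ∑ x, #(jetIndices (Fin n) (f x)) :=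
        Nat.mul_le_mul_left _ (sum_le_sum fun g _ => card_filter_lt_fstar_le f hBind φ g)
    _ = Fintype.card G * (#P * ∑ x, #(jetIndices (Fin n) (f x))) := by
        rw [sum_const, card_univ, smul_eq_mul, mul_left_comm]

theorem IsProjRepSet.pow_mul_sum_fstar_pow_le [NeZero n] {k L : ℕ}
    {P : Finset (Fin n → ZMod (p ^ (k + 1)))} (hP : IsProjRepSet (p ^ (k + 1)) n P)
    {f : (Fin n → ZMod (p ^ (k + 1))) → ℕ} (hf : ∀ w ∈ P, fstar f w ≤ p ^ L) :
    p ^ n * ∑ w ∈ P, fstar f w ^ n ≤ ((L + 1) * (p + n)) ^ n * (#P * ∑ x, f x ^ n) := by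
  have hlower : ∀ A : ℕ, A ^ n ≤
      (L + 1) ^ n * (n.factorial * #(jetIndices (Fin n) (A ⌈/⌉ (L + 1)))) := by
    simpa only [Fintype.card_fin] using
      pow_le_pow_mul_card_jetIndices_ceilDiv (σ := Fin n) L.succ_pos
  have hupper : ∀ a, n.factorial * #(jetIndices (Fin n) (p * a)) ≤ (p + n) ^ n * a ^ n := by
    simpa only [Fintype.card_fin, mul_pow] using
      factorial_mul_card_jetIndices_mul_le (σ := Fin n) p
  have hmain := hP.sum_card_jetIndices_fstar_ceilDiv_le (f := p • f) L.succ_pos fun w hw => by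
    rw [fstar_nsmul]
    exact (Nat.mul_le_mul_left p (hf w hw)).trans_eq (pow_succ' p L).symm
  simp only [fstar_nsmul, Pi.smul_apply, smul_eq_mul] at hmain
  calc p ^ n * ∑ w ∈ P, fstar f w ^ n = ∑ w ∈ P, (p * fstar f w) ^ n := by
        simp only [mul_sum, mul_pow]
    _ ≤ ∑ w ∈ P, (L + 1) ^ n *
          (n.factorial * #(jetIndices (Fin n) ((p * fstar f w) ⌈/⌉ (L + 1)))) :=
        sum_le_sum fun w _ => hlower _
    _ = (L + 1) ^ n * n.factorial *
          ∑ w ∈ P, #(jetIndices (Fin n) ((p * fstar f w) ⌈/⌉ (L + 1))) := by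
        simp only [mul_sum, mul_assoc]
    _ ≤ (L + 1) ^ n * n.factorial * (#P * ∑ x, #(jetIndices (Fin n) (p * f x))) :=
        Nat.mul_le_mul_left _ hmain
    _ = (L + 1) ^ n * (#P * ∑ x, n.factorial * #(jetIndices (Fin n) (p * f x))) := by
        rw [← mul_sum]; ring
    _ ≤ (L + 1) ^ n * (#P * ∑ x, (p + n) ^ n * f x ^ n) :=
        Nat.mul_le_mul_left _ (Nat.mul_le_mul_left _ (sum_le_sum fun x _ => hupper (f x)))
    _ = ((L + 1) * (p + n)) ^ n * (#P * ∑ x, f x ^ n) := by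
        rw [← mul_sum, mul_pow]; ring

end KakeyaMaximal

theorem stmt3_general (n p k : ℕ) (hn : 1 ≤ n) (hp : p.Prime) (hk : 1 ≤ k)
    (N : ℕ) [NeZero N] (hN : N = p ^ k)
    (P : Finset (Fin n → ZMod N)) (hP : IsProjRepSet N n P) (f : (Fin n → ZMod N) → ℕ) :
    (∑ x : Fin n → ZMod N, (f x : ℝ) ^ n) ≥
      ((((⌈Real.log ((P.sup (fstar f) : ℕ) : ℝ) / Real.log p⌉ : ℤ) : ℝ) + 1) ^ n)⁻¹ *
      ((1 + (n : ℝ) / p) ^ n)⁻¹ *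
      (P.card : ℝ)⁻¹ * ∑ u ∈ P, (fstar f u : ℝ) ^ n := by
  have : Fact p.Prime := ⟨hp⟩
  have : NeZero n := ⟨Nat.one_le_iff_ne_zero.1 hn⟩
  obtain ⟨k, rfl⟩ := Nat.exists_eq_add_of_le' hk
  subst hN
  have hp0 : (0 : ℝ) < p := Nat.cast_pos.2 hp.pos
  set L := Nat.clog p (P.sup (fstar f))
  have hceil : ⌈Real.log ((P.sup (fstar f) : ℕ) : ℝ) / Real.log p⌉ = L := by
    rw [Real.log_div_log, Real.ceil_logb_natCast (Nat.cast_nonneg _), Int.clog_natCast]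
  have hnat := hP.pow_mul_sum_fstar_pow_le (f := f) (L := L) fun w hw =>
    (le_sup (f := fstar f) hw).trans (Nat.le_pow_clog hp.one_lt _)
  have hreal : (p : ℝ) ^ n * ∑ w ∈ P, (fstar f w : ℝ) ^ n ≤
      ((L + 1) * (p + n)) ^ n * (#P * ∑ x, (f x : ℝ) ^ n) := by exact_mod_cast hnat
  have hscale : ((p : ℝ) + n) ^ n = p ^ n * (1 + n / p) ^ n := by
    rw [← mul_pow, mul_add, mul_one, mul_div_cancel₀ _ hp0.ne']
  rw [hceil, ge_iff_le, ← mul_inv, ← mul_inv]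
  refine inv_mul_le_of_le_mul₀ (by positivity) (by positivity)
    (le_of_mul_le_mul_left (hreal.trans_eq ?_) (pow_pos hp0 n))
  rw [mul_pow, hscale, Int.cast_natCast]
  ring

theorem stmt3 (n p k : ℕ) (hn : 1 ≤ n) (hp : p.Prime) (hnp : n < p) (hk : 1 ≤ k)
    (N : ℕ) [NeZero N] (hN : N = p ^ k)
    (P : Finset (Fin n → ZMod N)) (hP : IsProjRepSet N n P)
    (f : (Fin n → ZMod N) → ℕ) (hf : ∃ x, f x ≠ 0) :
    (∑ x : Fin n → ZMod N, (f x : ℝ) ^ n) ≥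
      ((((⌈Real.log ((P.sup (fstar f) : ℕ) : ℝ) / Real.log p⌉ : ℤ) : ℝ) + 1) ^ n)⁻¹ *
      ((1 + (n : ℝ) / p) ^ n)⁻¹ *
      (P.card : ℝ)⁻¹ * ∑ u ∈ P, (fstar f u : ℝ) ^ n :=
  stmt3_general n p k hn hp hk N hN P hP f
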